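/- Let ν : ℤ_{>0} → ℤ_{≥0} be finitely supported, and set P(X) = Π_{r≥1} Φ_r(X)^{ν(r)} ∈ ℤ[X]. Then the polynomial identity P(X²) · Π_{r≥1} Φ_{2r}(X)^{ν(2r)} = P(X) · Π_{r≥1} Φ_{2r}(X)^{ν(r)} holds in ℤ[X]. -/

import Mathlib

open Polynomial

/-!
For a prime `p`, `Φ_r(X^p)` is `Φ_{pr}(X)` if `p ∣ r` and `Φ_{pr}(X) * Φ_r(X)` otherwise. Hence
`P(X^p)` is `∏ Φ_{pr}^{ν(r)}` times the factors of `P` whose index is prime to `p`. The factors of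
`P` whose index is a multiple of `p` are exactly those of `∏ Φ_{pr}^{ν(pr)}`.
-/

theorem expand_prod_cyclotomic_pow {R : Type*} [CommRing R] {p : ℕ} (hp : p.Prime)
    (s : Finset ℕ) (ν : ℕ → ℕ) :
    expand R p (∏ r ∈ s, cyclotomic r R ^ ν r) =
      (∏ r ∈ s, cyclotomic (p * r) R ^ ν r) * ∏ r ∈ s with ¬p ∣ r, cyclotomic r R ^ ν r := by
  rw [map_prod, Finset.prod_filter, ← Finset.prod_mul_distrib]
  refine Finset.prod_congr rfl fun r _ ↦ ?_
  rw [map_pow, mul_comm p r]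
  by_cases hr : p ∣ r
  · rw [cyclotomic_expand_eq_cyclotomic hp hr, if_neg (not_not_intro hr), mul_one]
  · rw [cyclotomic_expand_eq_cyclotomic_mul hp hr, if_pos hr, mul_pow]

theorem prod_Icc_mul_left_eq_prod_filter_dvd {M : Type*} [CommMonoid M] {f : ℕ → M} {d N : ℕ}
    (hd : 0 < d) (hf : ∀ r, N < r → f r = 1) :
    ∏ r ∈ Finset.Icc 1 N, f (d * r) = ∏ r ∈ Finset.Icc 1 N with d ∣ r, f r := by
  have filter_subset_image :
      {r ∈ Finset.Icc 1 N | d ∣ r} ⊆ (Finset.Icc 1 N).image (d * ·) := by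
    intro r hr
    obtain ⟨hrN, k, rfl⟩ := Finset.mem_filter.mp hr
    obtain ⟨hpos, hle⟩ := Finset.mem_Icc.mp hrN
    exact Finset.mem_image_of_mem _ <| Finset.mem_Icc.mpr
      ⟨Nat.pos_of_mul_pos_left hpos, (Nat.le_mul_of_pos_left k hd).trans hle⟩
  have eq_one_of_notMem_filter : ∀ r ∈ (Finset.Icc 1 N).image (d * ·),
      r ∉ {r ∈ Finset.Icc 1 N | d ∣ r} → f r = 1 := by
    intro r hr hr'
    obtain ⟨k, hk, rfl⟩ := Finset.mem_image.mp hr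
    have hpos : 1 ≤ d * k := Nat.mul_pos hd (Finset.mem_Icc.mp hk).1
    refine hf _ (not_le.mp fun hle ↦ hr' ?_)
    exact Finset.mem_filter.mpr ⟨Finset.mem_Icc.mpr ⟨hpos, hle⟩, dvd_mul_right d k⟩
  calc ∏ r ∈ Finset.Icc 1 N, f (d * r)
      = ∏ r ∈ (Finset.Icc 1 N).image (d * ·), f r :=
        (Finset.prod_image (mul_right_injective₀ hd.ne').injOn).symm
    _ = ∏ r ∈ Finset.Icc 1 N with d ∣ r, f r :=
        (Finset.prod_subset filter_subset_image eq_one_of_notMem_filter).symm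

theorem stmt_3_general {R : Type*} [CommRing R] {p : ℕ} (hp : p.Prime) (ν : ℕ → ℕ) (N : ℕ)
    (hN : ∀ r : ℕ, N < r → ν r = 0) :
    (∏ r ∈ Finset.Icc 1 N, cyclotomic r R ^ ν r).comp (X ^ p) *
        ∏ r ∈ Finset.Icc 1 N, cyclotomic (p * r) R ^ ν (p * r) =
      (∏ r ∈ Finset.Icc 1 N, cyclotomic r R ^ ν r) *
        ∏ r ∈ Finset.Icc 1 N, cyclotomic (p * r) R ^ ν r := by
  have reindex : ∏ r ∈ Finset.Icc 1 N, cyclotomic (p * r) R ^ ν (p * r) =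
      ∏ r ∈ Finset.Icc 1 N with p ∣ r, cyclotomic r R ^ ν r :=
    prod_Icc_mul_left_eq_prod_filter_dvd (f := fun r ↦ cyclotomic r R ^ ν r) hp.pos
      fun r hr ↦ by rw [hN r hr, pow_zero]
  rw [← expand_eq_comp_X_pow, expand_prod_cyclotomic_pow hp, reindex, mul_assoc,
    Finset.prod_filter_not_mul_prod_filter, mul_comm]

/-- For a finitely supported `ν : ℤ_{>0} → ℤ_{≥0}` and
`P(X) = Π_{r≥1} Φ_r(X)^{ν(r)} ∈ ℤ[X]`, the identity
`P(X²) · Π_{r≥1} Φ_{2r}(X)^{ν(2r)} = P(X) · Π_{r≥1} Φ_{2r}(X)^{ν(r)}` holds in `ℤ[X]`.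
(Finite support is encoded by a bound `N` with `ν r = 0` for `r > N`.) -/
theorem stmt_3 (ν : ℕ → ℕ) (N : ℕ) (hN : ∀ r : ℕ, N < r → ν r = 0) :
    (∏ r ∈ Finset.Icc 1 N, Polynomial.cyclotomic r ℤ ^ ν r).comp (Polynomial.X ^ 2) *
        ∏ r ∈ Finset.Icc 1 N, Polynomial.cyclotomic (2 * r) ℤ ^ ν (2 * r) =
      (∏ r ∈ Finset.Icc 1 N, Polynomial.cyclotomic r ℤ ^ ν r) *
        ∏ r ∈ Finset.Icc 1 N, Polynomial.cyclotomic (2 * r) ℤ ^ ν r :=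
  stmt_3_general Nat.prime_two ν N hN
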